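/- (Lemma 4.2: failure of diagonalizability of the evolution symbol.) Let G be an area metric on ℝ⁴ such that the endomorphism K = ω̂_G ∘ Ĝ⁻¹ of Λ²((ℝ⁴)*) admits a real Jordan chain of length two: there exist λ ∈ ℝ and Ω₁, Ω₂ ∈ Λ²((ℝ⁴)*) with Ω₁ ≠ 0, KΩ₁ = λΩ₁ and KΩ₂ = Ω₁ + λΩ₂. Let (f₀,f₁,f₂,f₃) be any basis of ℝ⁴ with dual basis (f⁰,f¹,f²,f³) such that, with all components taken in this basis, 𝒢(f⁰,f⁰,f⁰,f⁰) ≠ 0 and the 3×3 matrix ((G⁻¹)^{0μ0ν})_{μ,ν∈{1,2,3}} is invertible (so that A⁰ is invertible). Then there exists a nonzero covector k in the span of f¹, f², f³ such that the 6×6 matrix C(k) = −(A⁰)⁻¹(A¹k₁ + A²k₂ + A³k₃) is not diagonalizable over ℂ: the algebraic multiplicity of its eigenvalue 0 strictly exceeds the geometric multiplicity. -/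

import Mathlib

noncomputable section

/-- First members of the ordered Petrov index pairs `[01],[02],[03],[12],[31],[23]`. -/
def pFst : Fin 6 → Fin 4 := ![0, 0, 0, 1, 3, 2]

/-- Second members of the ordered Petrov index pairs `[01],[02],[03],[12],[31],[23]`. -/
def pSnd : Fin 6 → Fin 4 := ![1, 2, 3, 2, 1, 3]

/-- The Petrov matrix of a rank-4 covariant tensor on `ℝ⁴`: the symmetric `6 × 6` matrix
of components `G_{abcd}` indexed by the ordered pairs `[01],[02],[03],[12],[31],[23]`. -/
def petrov (G : Fin 4 → Fin 4 → Fin 4 → Fin 4 → ℝ) : Matrix (Fin 6) (Fin 6) ℝ :=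
  Matrix.of fun A B => G (pFst A) (pSnd A) (pFst B) (pSnd B)

/-- The totally antisymmetric Levi-Civita symbol on four indices with `ε₀₁₂₃ = 1`. -/
def eps (a b c d : Fin 4) : ℝ :=
  (Matrix.of fun i j => if (![a, b, c, d] : Fin 4 → Fin 4) i = j then (1 : ℝ) else 0).det

/-- The Petrov index associated to a pair of distinct indices (arbitrary on the diagonal). -/
def bIdx : Fin 4 → Fin 4 → Fin 6 :=
  ![![0, 0, 1, 2], ![0, 0, 3, 4], ![1, 3, 0, 5], ![2, 4, 5, 0]]

/-- The sign relating the tensor component `T_{ab}` to the Petrov component at `bIdx a b`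
(`0` on the diagonal); the pair `[31]` is stored in the order `(3,1)`. -/
def bSgn : Fin 4 → Fin 4 → ℝ :=
  ![![0, 1, 1, 1], ![-1, 0, 1, -1], ![-1, -1, 0, 1], ![-1, 1, -1, 0]]

/-- The rank-4 tensor with the area metric symmetries reconstructed from a
(symmetric) Petrov matrix. -/
def fromPetrov (M : Matrix (Fin 6) (Fin 6) ℝ) : Fin 4 → Fin 4 → Fin 4 → Fin 4 → ℝ :=
  fun a b c d => bSgn a b * bSgn c d * M (bIdx a b) (bIdx c d)

/-- The components `(G⁻¹)^{abcd}` of the inverse area metric, characterized by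
`Petrov(G⁻¹) = Petrov(G)⁻¹`. -/
def ginv (G : Fin 4 → Fin 4 → Fin 4 → Fin 4 → ℝ) : Fin 4 → Fin 4 → Fin 4 → Fin 4 → ℝ :=
  fromPetrov (petrov G)⁻¹

/-- The area metric volume form `(ω_G)_{abcd} = |det Petrov(G)|^{1/6} ε_{abcd}`. -/
def vol (G : Fin 4 → Fin 4 → Fin 4 → Fin 4 → ℝ) (a b c d : Fin 4) : ℝ :=
  |(petrov G).det| ^ ((1 : ℝ) / 6) * eps a b c d

/-- The inverse volume form `(ω_G⁻¹)^{abcd} = |det Petrov(G)|^{-1/6} ε^{abcd}`. -/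
def volInv (G : Fin 4 → Fin 4 → Fin 4 → Fin 4 → ℝ) (a b c d : Fin 4) : ℝ :=
  |(petrov G).det| ^ (-(1 : ℝ) / 6) * eps a b c d

/-- The Fresnel polynomial
`𝒢(k,k,k,k) = -(1/24)(ω_G)_{mnpq}(ω_G)_{rstu}(G⁻¹)^{mnra}(G⁻¹)^{bpsc}(G⁻¹)^{dqtu} k_a k_b k_c k_d`
(all repeated indices summed over `0,…,3`; the symmetrization over `a,b,c,d` in the Fresnel
tensor is immaterial after contraction with `k_a k_b k_c k_d`). -/
def fresnelPoly (G : Fin 4 → Fin 4 → Fin 4 → Fin 4 → ℝ) (k : Fin 4 → ℝ) : ℝ :=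
  -(1 / 24) * ∑ m : Fin 4, ∑ n : Fin 4, ∑ p : Fin 4, ∑ q : Fin 4, ∑ r : Fin 4, ∑ s : Fin 4,
      ∑ t : Fin 4, ∑ u : Fin 4, ∑ a : Fin 4, ∑ b : Fin 4, ∑ c : Fin 4, ∑ d : Fin 4,
    vol G m n p q * vol G r s t u * ginv G m n r a * ginv G b p s c * ginv G d q t u *
      k a * k b * k c * k d

/-- Assemble a `6 × 6` matrix from four `3 × 3` blocks. -/
def blk (P Q R S : Matrix (Fin 3) (Fin 3) ℝ) : Matrix (Fin 6) (Fin 6) ℝ :=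
  Matrix.of fun i j =>
    if hi : (i : ℕ) < 3 then
      if hj : (j : ℕ) < 3 then P ⟨i, hi⟩ ⟨j, hj⟩
      else Q ⟨i, hi⟩ ⟨(j : ℕ) - 3, by have := j.isLt; omega⟩
    else
      if hj : (j : ℕ) < 3 then R ⟨(i : ℕ) - 3, by have := i.isLt; omega⟩ ⟨j, hj⟩
      else S ⟨(i : ℕ) - 3, by have := i.isLt; omega⟩ ⟨(j : ℕ) - 3, by have := j.isLt; omega⟩

/-- The principal-symbol matrix `A⁰` of the Maxwell evolution system. -/
def A0mat (G : Fin 4 → Fin 4 → Fin 4 → Fin 4 → ℝ) : Matrix (Fin 6) (Fin 6) ℝ :=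
  blk (Matrix.of fun μ ν => ginv G 0 μ.succ 0 ν.succ) 0 0 1

/-- The principal-symbol matrices `A^α`, `α ∈ {1,2,3}`, of the Maxwell evolution system. -/
def Aalpha (G : Fin 4 → Fin 4 → Fin 4 → Fin 4 → ℝ) (α : Fin 3) : Matrix (Fin 6) (Fin 6) ℝ :=
  blk
    (Matrix.of fun μ ν => -(ginv G 0 μ.succ ν.succ α.succ) - ginv G 0 ν.succ μ.succ α.succ)
    (Matrix.of fun μ ν => -(1 / 2) *
      ∑ γ : Fin 3, ∑ δ : Fin 3, vol G 0 ν.succ γ.succ δ.succ * ginv G γ.succ δ.succ μ.succ α.succ)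
    (Matrix.of fun μ ν => volInv G 0 μ.succ ν.succ α.succ)
    0

/-- The matrix `C(k) = -(A⁰)⁻¹ (A¹k₁ + A²k₂ + A³k₃)` of the evolution system. -/
def Cmat (G : Fin 4 → Fin 4 → Fin 4 → Fin 4 → ℝ) (k : Fin 4 → ℝ) :
    Matrix (Fin 6) (Fin 6) ℝ :=
  -((A0mat G)⁻¹ * ∑ α : Fin 3, k α.succ • Aalpha G α)

/-- The endomorphism `K = ω̂_G ∘ Ĝ⁻¹` of `Λ²((ℝ⁴)*)`, in Petrov coordinates. -/
def Kmat (G : Fin 4 → Fin 4 → Fin 4 → Fin 4 → ℝ) : Matrix (Fin 6) (Fin 6) ℝ :=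
  petrov (vol G) * (petrov G)⁻¹

/-- The components of a rank-4 covariant tensor in the basis whose `a`-th basis vector has
standard components `t^m_a` (the columns of `t`). -/
def transform (t : Matrix (Fin 4) (Fin 4) ℝ) (G : Fin 4 → Fin 4 → Fin 4 → Fin 4 → ℝ) :
    Fin 4 → Fin 4 → Fin 4 → Fin 4 → ℝ :=
  fun a b c d => ∑ m : Fin 4, ∑ n : Fin 4, ∑ p : Fin 4, ∑ q : Fin 4,
    t m a * t n b * t p c * t q d * G m n p q

def Wd (a b : Fin 4 → ℝ) : Fin 6 → ℝ :=
  fun A => a (pFst A) * b (pSnd A) - a (pSnd A) * b (pFst A)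

theorem Wd_add_left (a a' b) : Wd (a + a') b = Wd a b + Wd a' b := by
  ext A; simp [Wd]; ring
theorem Wd_smul_left (c : ℝ) (a b) : Wd (c • a) b = c • Wd a b := by
  ext A; simp [Wd]; ring
theorem Wd_add_right (a b b') : Wd a (b + b') = Wd a b + Wd a b' := by
  ext A; simp [Wd]; ring
theorem Wd_smul_right (c : ℝ) (a b) : Wd a (c • b) = c • Wd a b := by
  ext A; simp [Wd]; ring
theorem Wd_self (a) : Wd a a = 0 := by
  ext A; simp [Wd]; ring
theorem Wd_swap (a b) : Wd a b = (-1 : ℝ) • Wd b a := by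
  ext A; simp [Wd]; ring

def Bf (H : Matrix (Fin 6) (Fin 6) ℝ) (X Y : Fin 6 → ℝ) : ℝ := X ⬝ᵥ H.mulVec Y

theorem Bf_add_left (H X X' Y) : Bf H (X + X') Y = Bf H X Y + Bf H X' Y := by
  simp [Bf, add_dotProduct]
theorem Bf_smul_left (H) (c : ℝ) (X Y) : Bf H (c • X) Y = c * Bf H X Y := by
  simp [Bf, smul_dotProduct]
theorem Bf_add_right (H X Y Y') : Bf H X (Y + Y') = Bf H X Y + Bf H X Y' := by
  simp [Bf, Matrix.mulVec_add, dotProduct_add]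
theorem Bf_smul_right (H) (c : ℝ) (X Y) : Bf H X (c • Y) = c * Bf H X Y := by
  simp [Bf, Matrix.mulVec_smul, dotProduct_smul]
theorem Bf_zero_left (H Y) : Bf H 0 Y = 0 := by simp [Bf]
theorem Bf_zero_right (H X) : Bf H X 0 = 0 := by simp [Bf]
theorem Bf_symm (H : Matrix (Fin 6) (Fin 6) ℝ) (hH : H.transpose = H) (X Y) :
    Bf H X Y = Bf H Y X := by
  unfold Bf
  rw [Matrix.dotProduct_mulVec, ← Matrix.mulVec_transpose, hH, dotProduct_comm]

def f0 : Fin 4 → ℝ := ![1, 0, 0, 0]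

def Phi (H : Matrix (Fin 6) (Fin 6) ℝ) (k x p : Fin 4 → ℝ) : ℝ :=
  Bf H (Wd f0 p) (Wd x k) + Bf H (Wd f0 x) (Wd p k)

def Cnd (H : Matrix (Fin 6) (Fin 6) ℝ) (k p : Fin 4 → ℝ) : Prop :=
  p 0 = 0 ∧ (∀ y z : Fin 4 → ℝ, y 0 = 0 → z 0 = 0 → Bf H (Wd p k) (Wd y z) = 0) ∧
    Bf H (Wd p k) (Wd f0 k) = 0

def Good (H : Matrix (Fin 6) (Fin 6) ℝ) (k x : Fin 4 → ℝ) : Prop :=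
  k 0 = 0 ∧ Wd k x ≠ 0 ∧ (∀ y, Bf H (Wd k x) (Wd k y) = 0) ∧
    ∀ p, Cnd H k p → Phi H k x p = 0

/-- explicit Levi-Civita Petrov matrix -/
def Emat : Matrix (Fin 6) (Fin 6) ℝ :=
  !![0,0,0,0,0,1; 0,0,0,0,1,0; 0,0,0,1,0,0; 0,0,1,0,0,0; 0,1,0,0,0,0; 1,0,0,0,0,0]

theorem Bf_Emat (X Y : Fin 6 → ℝ) : Bf Emat X Y =
    X 0 * Y 5 + X 1 * Y 4 + X 2 * Y 3 + X 3 * Y 2 + X 4 * Y 1 + X 5 * Y 0 := by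
  simp [Bf, Emat, Matrix.mulVec, dotProduct, Fin.sum_univ_succ]; 

  ring

theorem Wd_vals (a b : Fin 4 → ℝ) : Wd a b =
    ![a 0 * b 1 - a 1 * b 0, a 0 * b 2 - a 2 * b 0, a 0 * b 3 - a 3 * b 0,
      a 1 * b 2 - a 2 * b 1, a 3 * b 1 - a 1 * b 3, a 2 * b 3 - a 3 * b 2] := by
  ext A; fin_cases A <;> simp [Wd, pFst, pSnd]

theorem Bf_Emat_Wd (a b c d : Fin 4 → ℝ) : Bf Emat (Wd a b) (Wd c d) =
   (a 0 * b 1 - a 1 * b 0) * (c 2 * d 3 - c 3 * d 2) +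
   (a 0 * b 2 - a 2 * b 0) * (c 3 * d 1 - c 1 * d 3) +
   (a 0 * b 3 - a 3 * b 0) * (c 1 * d 2 - c 2 * d 1) +
   (a 1 * b 2 - a 2 * b 1) * (c 0 * d 3 - c 3 * d 0) +
   (a 3 * b 1 - a 1 * b 3) * (c 0 * d 2 - c 2 * d 0) +
   (a 2 * b 3 - a 3 * b 2) * (c 0 * d 1 - c 1 * d 0) := by
  rw [Bf_Emat, Wd_vals, Wd_vals]; simp

theorem Phi_add (H k x p p') : Phi H k x (p + p') = Phi H k x p + Phi H k x p' := by
  simp only [Phi, Wd_add_left, Wd_add_right, Bf_add_left, Bf_add_right]; ring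
theorem Phi_smul (H k x p) (c : ℝ) : Phi H k x (c • p) = c * Phi H k x p := by
  simp only [Phi, Wd_smul_left, Wd_smul_right, Bf_smul_left, Bf_smul_right]; ring
theorem Phi_add' (H k x x' p) : Phi H k (x + x') p = Phi H k x p + Phi H k x' p := by
  simp only [Phi, Wd_add_left, Wd_add_right, Bf_add_left, Bf_add_right]; ring
theorem Phi_smul' (H k x p) (c : ℝ) : Phi H k (c • x) p = c * Phi H k x p := by
  simp only [Phi, Wd_smul_left, Wd_smul_right, Bf_smul_left, Bf_smul_right]; ring

def PhiL (H : Matrix (Fin 6) (Fin 6) ℝ) (k : Fin 4 → ℝ) :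
    (Fin 4 → ℝ) →ₗ[ℝ] (Fin 4 → ℝ) →ₗ[ℝ] ℝ :=
  LinearMap.mk₂ ℝ (Phi H k) (fun x x' p => Phi_add' H k x x' p)
    (fun c x p => Phi_smul' H k x p c) (fun x p p' => Phi_add H k x p p')
    (fun c x p => Phi_smul H k x p c)

/-- the kernel of the form `Q_k` inside the orthogonal complement of `k` -/
def Zsub (H : Matrix (Fin 6) (Fin 6) ℝ) (k : Fin 4 → ℝ) : Submodule ℝ (Fin 4 → ℝ) where
  carrier := {x | x ⬝ᵥ k = 0 ∧ ∀ y, Bf H (Wd k x) (Wd k y) = 0}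
  add_mem' := by
    rintro x x' ⟨h1, h2⟩ ⟨h3, h4⟩
    refine ⟨by rw [add_dotProduct, h1, h3, add_zero], fun y => ?_⟩
    rw [Wd_add_right, Bf_add_left, h2, h4, add_zero]
  zero_mem' := by
    refine ⟨by simp, fun y => ?_⟩
    have : Wd k 0 = 0 := by ext A; simp [Wd]
    rw [this, Bf_zero_left]
  smul_mem' := by
    rintro c x ⟨h1, h2⟩
    refine ⟨by rw [smul_dotProduct, h1, smul_zero], fun y => ?_⟩
    rw [Wd_smul_right, Bf_smul_left, h2, mul_zero]

theorem good_of_nonspatial (H : Matrix (Fin 6) (Fin 6) ℝ) (hH : H.transpose = H)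
    (k v : Fin 4 → ℝ) (hk0 : k 0 = 0) (hk : k ≠ 0) (hv : v 0 ≠ 0)
    (hQ : ∀ y, Bf H (Wd k v) (Wd k y) = 0) : ∃ x, Good H k x := by
  have hkk : k ⬝ᵥ k ≠ 0 := by simpa using hk
  set Z := Zsub H k with hZ
  let S : Submodule ℝ (Fin 4 → ℝ) := Z ⊓ LinearMap.ker (LinearMap.proj (R := ℝ) (φ := fun _ : Fin 4 => ℝ) 0)
  have hproj : ∀ x : Fin 4 → ℝ, (x + (-(x ⬝ᵥ k / k ⬝ᵥ k)) • k) ⬝ᵥ k = 0 := by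
    intro x
    rw [add_dotProduct, smul_dotProduct, smul_eq_mul]; field_simp; ring
  have hWproj : ∀ (x : Fin 4 → ℝ) (c : ℝ), Wd k (x + c • k) = Wd k x := by
    intro x c
    rw [Wd_add_right, Wd_smul_right, Wd_self, smul_zero, add_zero]
  have hlt : S < Z := by
    refine lt_of_le_of_ne inf_le_left ?_
    intro h
    have hmem : v + (-(v ⬝ᵥ k / k ⬝ᵥ k)) • k ∈ Z := by
      refine ⟨hproj v, fun y => ?_⟩
      rw [hWproj]; exact hQ y
    rw [← h] at hmem
    have := hmem.2
    simp [hk0] at this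
    exact hv this
  have hfr : Module.finrank ℝ (Module.Dual ℝ S) < Module.finrank ℝ Z := by
    rw [Subspace.dual_finrank_eq]
    exact Submodule.finrank_lt_finrank_of_lt hlt
  let f : Z →ₗ[ℝ] Module.Dual ℝ S := S.subtype.dualMap ∘ₗ (PhiL H k) ∘ₗ Z.subtype
  have hker := LinearMap.ker_ne_bot_of_finrank_lt (f := f) hfr
  obtain ⟨⟨x, hxZ⟩, hx1, hx2⟩ := Submodule.exists_mem_ne_zero_of_ne_bot hker
  have hx0 : x ≠ 0 := by
    intro h; apply hx2; ext1; exact h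
  have hΦ : ∀ p ∈ S, Phi H k x p = 0 := by
    intro p hp
    have := LinearMap.congr_fun (LinearMap.mem_ker.1 hx1) ⟨p, hp⟩
    simpa [f, PhiL] using this
  obtain ⟨hxk, hxQ⟩ := hxZ
  refine ⟨x, hk0, ?_, hxQ, ?_⟩
  · intro hW
    rw [Wd_vals] at hW
    have e0 := congrFun hW 0
    have e1 := congrFun hW 1
    have e2 := congrFun hW 2
    have e3 := congrFun hW 3
    have e4 := congrFun hW 4
    have e5 := congrFun hW 5
    simp [hk0] at e0 e1 e2 e3 e4 e5
    simp [dotProduct, Fin.sum_univ_four, hk0] at hxk hkk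
    have hx00 : x 0 = 0 := by
      by_contra hne
      simp [hne] at e0 e1 e2
      apply hkk; rw [e0, e1, e2]; ring
    have key : (k 1 * k 1 + k 2 * k 2 + k 3 * k 3) * (x 1 * x 1 + x 2 * x 2 + x 3 * x 3) = 0 := by
      linear_combination (x 1 * k 1 + x 2 * k 2 + x 3 * k 3) * hxk + (k 1 * x 2 - k 2 * x 1) * e3
        + (k 3 * x 1 - k 1 * x 3) * e4 + (k 2 * x 3 - k 3 * x 2) * e5
    have key2 := (mul_eq_zero.1 key).resolve_left hkk
    apply hx0
    ext i
    fin_cases i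
    · exact hx00
    all_goals simp; nlinarith [mul_self_nonneg (x 1), mul_self_nonneg (x 2), mul_self_nonneg (x 3)]
  · rintro p ⟨hp0, hp1, hp2⟩
    have hxk' : Phi H k x k = 0 := by
      unfold Phi
      rw [Wd_self, Bf_zero_right, add_zero, Bf_symm H hH, Wd_swap f0 k, Wd_swap x k,
        Bf_smul_left, Bf_smul_right, hxQ]
      ring
    have hpS : p + (-(p ⬝ᵥ k / k ⬝ᵥ k)) • k ∈ S := by
      refine ⟨⟨hproj p, fun y => ?_⟩, by simp [hp0, hk0]⟩
      rw [hWproj]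
      have hy : y = y 0 • f0 + (fun i => if i = 0 then 0 else y i) := by
        ext i; fin_cases i <;> simp [f0]
      have h1 := hp1 k (fun i => if i = 0 then 0 else y i) hk0 (by simp)
      rw [hy, Wd_add_right, Wd_smul_right, Bf_add_right, Bf_smul_right, Wd_swap k p,
        Bf_smul_left, Bf_smul_left, h1, Wd_swap k f0, Bf_smul_right, hp2]
      ring
    have := hΦ _ hpS
    rw [Phi_add, Phi_smul, hxk'] at this
    simpa using this

def det3 (a b c : Fin 4 → ℝ) : ℝ :=
  a 1 * (b 2 * c 3 - b 3 * c 2) + a 2 * (b 3 * c 1 - b 1 * c 3) + a 3 * (b 1 * c 2 - b 2 * c 1)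

theorem cramer3 (a b c p : Fin 4 → ℝ) (ha : a 0 = 0) (hb : b 0 = 0) (hc : c 0 = 0) (hp : p 0 = 0)
    (hd : det3 a b c ≠ 0) : ∃ α β γ : ℝ, p = α • a + β • b + γ • c := by
  refine ⟨det3 p b c / det3 a b c, det3 a p c / det3 a b c, det3 a b p / det3 a b c, ?_⟩
  ext i
  fin_cases i
  · simp [ha, hb, hc, hp]
  all_goals
    simp
    field_simp
    simp [det3]
    ring

section spatial

variable (H : Matrix (Fin 6) (Fin 6) ℝ) (hH : H.transpose = H) (lam : ℝ)

theorem eig_Bf (a b : Fin 4 → ℝ) (h : H.mulVec (Wd a b) = lam • Emat.mulVec (Wd a b)) (X) :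
    Bf H X (Wd a b) = lam * Bf Emat X (Wd a b) := by
  simp [Bf, h, dotProduct_smul]

theorem eig_Phi (hH : H.transpose = H) (k x : Fin 4 → ℝ)
    (h : H.mulVec (Wd k x) = lam • Emat.mulVec (Wd k x)) :
    Phi H k x k = 0 ∧ Phi H k x x = 0 := by
  have e := eig_Bf H lam k x h
  unfold Phi
  rw [Wd_self, Bf_zero_right, Wd_swap x k, Bf_smul_right, Bf_smul_right, e, e, Bf_Emat_Wd,
    Bf_Emat_Wd]
  constructor <;> ring

theorem eig_Q (hH : H.transpose = H) (k x y : Fin 4 → ℝ)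
    (h : H.mulVec (Wd k x) = lam • Emat.mulVec (Wd k x)) :
    Bf H (Wd k x) (Wd k y) = 0 := by
  rw [Bf_symm H hH, eig_Bf H lam k x h, Bf_Emat_Wd]; ring

/-- a non-good pair gives an obstruction covector -/
theorem obstruction (hH : H.transpose = H) (k x : Fin 4 → ℝ) (hk : k 0 = 0)
    (hkx : Wd k x ≠ 0) (h : H.mulVec (Wd k x) = lam • Emat.mulVec (Wd k x))
    (hbad : ¬ Good H k x) : ∃ p, Cnd H k p ∧ Phi H k x p ≠ 0 := by
  by_contra hcon
  push Not at hcon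
  exact hbad ⟨hk, hkx, fun y => eig_Q H lam hH k x y h, hcon⟩

/-- the obstruction transfers to any third spatial covector -/
theorem obstruction_transfer (hH : H.transpose = H) (k x c : Fin 4 → ℝ) (hk : k 0 = 0)
    (hx : x 0 = 0) (hc : c 0 = 0)
    (hkx : Wd k x ≠ 0) (h : H.mulVec (Wd k x) = lam • Emat.mulVec (Wd k x))
    (hd : det3 k x c ≠ 0)
    (hbad : ¬ Good H k x) : Cnd H k c := by
  obtain ⟨p, ⟨hp0, hp1, hp2⟩, hΦ⟩ := obstruction H lam hH k x hk hkx h hbad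
  obtain ⟨α, β, γ, rfl⟩ := cramer3 k x c p hk hx hc hp0 hd
  obtain ⟨e1, e2⟩ := eig_Phi H lam hH k x h
  rw [Phi_add, Phi_add, Phi_smul, Phi_smul, Phi_smul, e1, e2] at hΦ
  have hγ : γ ≠ 0 := by rintro rfl; simp at hΦ
  have hW : Wd (α • k + β • x + γ • c) k = β • Wd x k + γ • Wd c k := by
    rw [Wd_add_left, Wd_add_left, Wd_smul_left, Wd_smul_left, Wd_smul_left, Wd_self]; simp
  rw [hW] at hp2
  have hxk : ∀ X, Bf H (Wd x k) X = - (lam * Bf Emat X (Wd k x)) := by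
    intro X
    rw [Wd_swap x k, Bf_smul_left, Bf_symm H hH, eig_Bf H lam k x h]; ring
  refine ⟨hc, fun y z hy hz => ?_, ?_⟩
  · have := hp1 y z hy hz
    rw [hW, Bf_add_left, Bf_smul_left, Bf_smul_left, hxk, Bf_Emat_Wd, hk, hx, hy, hz] at this
    have h3 : γ * Bf H (Wd c k) (Wd y z) = 0 := by linear_combination this
    exact (mul_eq_zero.1 h3).resolve_left hγ
  · rw [Bf_add_left, Bf_smul_left, Bf_smul_left, hxk, Bf_Emat_Wd] at hp2
    have h3 : γ * Bf H (Wd c k) (Wd f0 k) = 0 := by linear_combination hp2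
    exact (mul_eq_zero.1 h3).resolve_left hγ

theorem det3_ne (k x c : Fin 4 → ℝ) (hH : H.transpose = H) (hk : k 0 = 0) (hx : x 0 = 0)
    (hc : c 0 = 0) (hkx : Wd k x ≠ 0) (h : H.mulVec (Wd k x) = lam • Emat.mulVec (Wd k x))
    (hΦ : Phi H k x c ≠ 0) : det3 k x c ≠ 0 := by
  intro hd
  apply hΦ
  let n : Fin 4 → ℝ := ![0, k 2 * x 3 - k 3 * x 2, k 3 * x 1 - k 1 * x 3, k 1 * x 2 - k 2 * x 1]
  have hn : det3 k x n ≠ 0 := by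
    intro h0
    apply hkx
    have h0' : (k 2 * x 3 - k 3 * x 2) * (k 2 * x 3 - k 3 * x 2) +
      (k 3 * x 1 - k 1 * x 3) * (k 3 * x 1 - k 1 * x 3) +
      (k 1 * x 2 - k 2 * x 1) * (k 1 * x 2 - k 2 * x 1) = 0 := by
      simp [det3, n] at h0
      linear_combination h0
    rw [Wd_vals]
    ext i
    fin_cases i
    · simp [hk, hx]
    · simp [hk, hx]
    · simp [hk, hx]
    all_goals
      simp
      nlinarith [mul_self_nonneg (k 2 * x 3 - k 3 * x 2), mul_self_nonneg (k 3 * x 1 - k 1 * x 3),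
        mul_self_nonneg (k 1 * x 2 - k 2 * x 1)]
  obtain ⟨α, β, γ, rfl⟩ := cramer3 k x n c hk hx (by simp [n]) hc hn
  have hγ : γ * det3 k x n = 0 := by
    rw [← hd]; simp [det3]; ring
  have hγ0 := (mul_eq_zero.1 hγ).resolve_right hn
  obtain ⟨e1, e2⟩ := eig_Phi H lam hH k x h
  rw [Phi_add, Phi_add, Phi_smul, Phi_smul, Phi_smul, e1, e2, hγ0]; ring

theorem good_of_spatial (hH : H.transpose = H) (a b : Fin 4 → ℝ) (ha : a 0 = 0) (hb : b 0 = 0)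
    (hab : Wd a b ≠ 0) (h : H.mulVec (Wd a b) = lam • Emat.mulVec (Wd a b)) :
    ∃ k x, Good H k x := by
  by_contra hcon
  push Not at hcon
  have hba : Wd b a = (-1 : ℝ) • Wd a b := Wd_swap b a
  have habb : Wd (a + b) b = Wd a b := by rw [Wd_add_left, Wd_self, add_zero]
  obtain ⟨c, hca, hΦ⟩ := obstruction H lam hH a b ha hab h (hcon a b)
  have hc := hca.1
  have hd := det3_ne H lam a b c hH ha hb hc hab h hΦ
  have hcb : Cnd H b c := by
    refine obstruction_transfer H lam hH b a c hb ha hc ?_ ?_ ?_ (hcon b a)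
    · rw [hba]; simpa using hab
    · rw [hba, Matrix.mulVec_smul, Matrix.mulVec_smul, h, smul_comm]
    · intro h0; apply hd; simp only [det3] at h0 ⊢; linear_combination -h0
  have hcab : Cnd H (a + b) c := by
    refine obstruction_transfer H lam hH (a + b) b c (by simp [ha, hb]) hb hc ?_ ?_ ?_ (hcon _ b)
    · rw [habb]; exact hab
    · rw [habb]; exact h
    · intro h0; apply hd; simp only [det3, Pi.add_apply] at h0 ⊢; linear_combination h0
  have eab := fun X => eig_Bf H lam a b h X
  have eab' : ∀ y z : Fin 4 → ℝ, y 0 = 0 → z 0 = 0 → Bf H (Wd y z) (Wd a b) = 0 := by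
    intro y z hy hz
    rw [eab, Bf_Emat_Wd, ha, hb, hy, hz]; ring
  have eabf1 : Bf H (Wd f0 a) (Wd a b) = 0 := by rw [eab, Bf_Emat_Wd]; ring
  have eabf2 : Bf H (Wd f0 b) (Wd a b) = 0 := by rw [eab, Bf_Emat_Wd]; ring
  obtain ⟨-, ca1, ca2⟩ := hca
  obtain ⟨-, cb1, cb2⟩ := hcb
  obtain ⟨-, cab1, cab2⟩ := hcab
  -- normal-form values
  have s1 : Bf H (Wd f0 a) (Wd c a) = 0 := by rw [Bf_symm H hH]; exact ca2
  have s2 : Bf H (Wd f0 b) (Wd c b) = 0 := by rw [Bf_symm H hH]; exact cb2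
  have s3 : Bf H (Wd f0 a) (Wd c b) + Bf H (Wd f0 b) (Wd c a) = 0 := by
    rw [Wd_add_right, Wd_add_right, Bf_add_left, Bf_add_right, Bf_add_right, ca2, cb2] at cab2
    rw [Bf_symm H hH (Wd f0 a), Bf_symm H hH (Wd f0 b)]
    linear_combination cab2
  set φ := Phi H a b c with hφ
  have hφ' : φ = - Bf H (Wd f0 c) (Wd a b) + Bf H (Wd f0 b) (Wd c a) := by
    rw [hφ, Phi, hba, Bf_smul_right]; ring
  set γ := Bf H (Wd f0 c) (Wd c a) with hγ
  -- u = φ c + s b, with s to be chosen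
  let u : Fin 4 → ℝ := φ • c + (-γ) • b
  have hWua : Wd u a = φ • Wd c a + γ • Wd a b := by
    simp only [u, Wd_add_left, Wd_smul_left, hba, smul_smul]
    simp
  have hu0 : u 0 = 0 := by simp [u, hc, hb]
  have hda : det3 a b u = φ * det3 a b c := by simp [det3, u]; ring
  have hdu : det3 a b u ≠ 0 := by rw [hda]; exact mul_ne_zero hΦ hd
  apply hcon u a
  refine ⟨hu0, ?_, ?_, ?_⟩
  · intro h0
    apply hdu
    rw [Wd_vals] at h0
    have e3 := congrFun h0 3
    have e4 := congrFun h0 4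
    have e5 := congrFun h0 5
    simp at e3 e4 e5
    simp only [det3]
    linear_combination b 3 * e3 + b 2 * e4 + b 1 * e5
  · intro y
    have hy : y = y 0 • f0 + (fun i => if i = 0 then 0 else y i) := by
      ext i; fin_cases i <;> simp [f0]
    have hys : Bf H (Wd u a) (Wd u (fun i => if i = 0 then 0 else y i)) = 0 := by
      rw [hWua, Bf_add_left, Bf_smul_left, Bf_smul_left, ca1 _ _ hu0 (by simp), Bf_symm H hH,
        eab' _ _ hu0 (by simp)]
      simp
    have hf : Bf H (Wd u a) (Wd u f0) = 0 := by
      rw [Bf_symm H hH, Wd_swap u f0, hWua]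
      simp only [u, Wd_add_right, Wd_smul_right, Bf_smul_left, Bf_add_left, Bf_add_right,
        Bf_smul_right, eabf2, ← hγ]
      rw [hφ']; ring
    rw [hy, Wd_add_right, Wd_smul_right, Bf_add_right, Bf_smul_right, hys, hf]; ring
  · rintro p ⟨hp0, -, -⟩
    obtain ⟨α, β, δ, rfl⟩ := cramer3 a b c p ha hb hc hp0 hd
    rw [Phi_add, Phi_add, Phi_smul, Phi_smul, Phi_smul]
    have hWau : Wd a u = (-φ) • Wd c a + (-γ) • Wd a b := by
      rw [Wd_swap a u, hWua]; ext i; simp; ring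
    have hWbu : Wd b u = (-φ) • Wd c b := by
      rw [Wd_swap b u]; simp only [u, Wd_add_left, Wd_smul_left, Wd_self]; ext i; simp
    have hWcu : Wd c u = (-γ) • Wd c b := by
      simp only [u, Wd_add_right, Wd_smul_right, Wd_self]; ext i; simp
    have p1 : Phi H u a a = 0 := by
      simp only [Phi, hWau, Bf_add_right, Bf_smul_right, s1, eabf1]; ring
    have p2 : Phi H u a b = 0 := by
      simp only [Phi, hWau, hWbu, Bf_add_right, Bf_smul_right, eabf2]
      linear_combination (-φ) * s3
    have p3 : Phi H u a c = 0 := by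
      simp only [Phi, hWau, hWcu, Bf_add_right, Bf_smul_right, ← hγ]
      linear_combination (-γ) * s3 - γ * hφ'
    rw [p1, p2, p3]; ring

theorem good_of_eigen (hH : H.transpose = H) (F : Fin 6 → ℝ) (hF : F ≠ 0)
    (hpl : F 0 * F 5 + F 1 * F 4 + F 2 * F 3 = 0)
    (h : H.mulVec F = lam • Emat.mulVec F) : ∃ k x, Good H k x := by
  -- rows of the antisymmetric matrix
  by_cases hs : F 0 = 0 ∧ F 1 = 0 ∧ F 2 = 0
  · obtain ⟨z0, z1, z2⟩ := hs
    have : ∃ a b : Fin 4 → ℝ, a 0 = 0 ∧ b 0 = 0 ∧ Wd a b = F := by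
      by_cases h3 : F 3 = 0
      · refine ⟨![0, 0, 0, 1], ![0, F 4, - F 5, 0], rfl, rfl, ?_⟩
        rw [Wd_vals]; ext i; fin_cases i <;> simp [z0, z1, z2, h3]
      · refine ⟨![0, F 3, 0, - F 5], ![0, 0, 1, - F 4 / F 3], rfl, rfl, ?_⟩
        rw [Wd_vals]; ext i; fin_cases i <;> simp [z0, z1, z2]
        all_goals field_simp
    obtain ⟨a, b, ha, hb, rfl⟩ := this
    exact good_of_spatial H lam hH a b ha hb hF h
  · have : ∃ v : Fin 4 → ℝ, v 0 ≠ 0 ∧ Wd ![0, F 0, F 1, F 2] v = F := by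
      by_cases h0 : F 0 = 0
      · by_cases h1 : F 1 = 0
        · have h2 : F 2 ≠ 0 := fun h2 => hs ⟨h0, h1, h2⟩
          refine ⟨![-1, F 4 / F 2, - F 5 / F 2, 0], by simp, ?_⟩
          rw [Wd_vals]; ext i; fin_cases i <;> simp [h0, h1]
          all_goals try field_simp
          all_goals simp [h0, h1] at hpl
          all_goals simp_all
        · refine ⟨![-1, - F 3 / F 1, 0, F 5 / F 1], by simp, ?_⟩
          rw [Wd_vals]; ext i; fin_cases i <;> simp [h0] <;> field_simp
          all_goals linear_combination -hpl + F 5 * h0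
      · refine ⟨![-1, 0, F 3 / F 0, - F 4 / F 0], by simp, ?_⟩
        rw [Wd_vals]; ext i; fin_cases i <;> simp <;> field_simp
        all_goals linear_combination -hpl
    obtain ⟨v, hv, hvF⟩ := this
    have hk : (![0, F 0, F 1, F 2] : Fin 4 → ℝ) ≠ 0 := by
      intro h0; apply hs
      exact ⟨congrFun h0 1, congrFun h0 2, congrFun h0 3⟩
    obtain ⟨x, hx⟩ := good_of_nonspatial H hH _ v rfl hk hv
      (fun y => eig_Q H lam hH _ v y (by rw [hvF]; exact h))
    exact ⟨_, x, hx⟩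
end spatial


def eps3 : Fin 3 → Fin 3 → Fin 3 → ℝ :=
  ![![![0,0,0],![0,0,1],![0,-1,0]], ![![0,0,-1],![0,0,0],![1,0,0]], ![![0,1,0],![-1,0,0],![0,0,0]]]

def epsZ (a b c d : Fin 4) : ℤ :=
  (Matrix.of fun i j => if (![a, b, c, d] : Fin 4 → Fin 4) i = j then (1 : ℤ) else 0).det

theorem eps_epsZ (a b c d : Fin 4) : eps a b c d = (epsZ a b c d : ℝ) := by
  unfold eps epsZ
  rw [Int.cast_det]
  congr 1
  ext i j
  simp

def eps3Z : Fin 3 → Fin 3 → Fin 3 → ℤ :=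
  ![![![0,0,0],![0,0,1],![0,-1,0]], ![![0,0,-1],![0,0,0],![1,0,0]], ![![0,1,0],![-1,0,0],![0,0,0]]]

theorem epsZ_eq : ∀ i j l : Fin 3, epsZ 0 i.succ j.succ l.succ = eps3Z i j l := by
  decide +kernel

theorem eps_eq (i j l : Fin 3) : eps 0 i.succ j.succ l.succ = eps3 i j l := by
  rw [eps_epsZ, epsZ_eq]
  fin_cases i <;> fin_cases j <;> fin_cases l <;> simp [eps3, eps3Z]

def EmatZ : Fin 6 → Fin 6 → ℤ :=
  ![![0,0,0,0,0,1], ![0,0,0,0,1,0], ![0,0,0,1,0,0], ![0,0,1,0,0,0], ![0,1,0,0,0,0], ![1,0,0,0,0,0]]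

theorem petrov_epsZ : ∀ A B : Fin 6,
    epsZ (pFst A) (pSnd A) (pFst B) (pSnd B) = EmatZ A B := by
  decide +kernel

theorem petrov_eps (A B : Fin 6) : eps (pFst A) (pSnd A) (pFst B) (pSnd B) = Emat A B := by
  rw [eps_epsZ, petrov_epsZ]
  fin_cases A <;> fin_cases B <;> simp [Emat, EmatZ]

def A0x (h : Matrix (Fin 6) (Fin 6) ℝ) : Matrix (Fin 6) (Fin 6) ℝ :=
  !![h 0 0, h 0 1, h 0 2, 0, 0, 0; h 1 0, h 1 1, h 1 2, 0, 0, 0; h 2 0, h 2 1, h 2 2, 0, 0, 0;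
     0, 0, 0, 1, 0, 0; 0, 0, 0, 0, 1, 0; 0, 0, 0, 0, 0, 1]

/-- `Σ_α k_α h^{A ν α}` -/
def Lx (h : Matrix (Fin 6) (Fin 6) ℝ) (k : Fin 4 → ℝ) (A : Fin 6) : Fin 3 → ℝ :=
  ![h A 3 * k 2 - h A 4 * k 3, - h A 3 * k 1 + h A 5 * k 3, h A 4 * k 1 - h A 5 * k 2]

def Ax (h : Matrix (Fin 6) (Fin 6) ℝ) (w : ℝ) (k : Fin 4 → ℝ) : Matrix (Fin 6) (Fin 6) ℝ :=
  let L := Lx h k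
  !![-L 0 0 - L 0 0, -L 0 1 - L 1 0, -L 0 2 - L 2 0, -w * L 5 0, -w * L 4 0, -w * L 3 0;
     -L 1 0 - L 0 1, -L 1 1 - L 1 1, -L 1 2 - L 2 1, -w * L 5 1, -w * L 4 1, -w * L 3 1;
     -L 2 0 - L 0 2, -L 2 1 - L 1 2, -L 2 2 - L 2 2, -w * L 5 2, -w * L 4 2, -w * L 3 2;
     0, w⁻¹ * k 3, -w⁻¹ * k 2, 0, 0, 0;
     -w⁻¹ * k 3, 0, w⁻¹ * k 1, 0, 0, 0;
     w⁻¹ * k 2, -w⁻¹ * k 1, 0, 0, 0, 0]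

theorem A0mat_eq (G) : A0mat G = A0x (petrov G)⁻¹ := by
  ext i j
  fin_cases i <;> fin_cases j <;> simp [A0mat, blk, A0x, ginv, fromPetrov, bSgn, bIdx]



set_option maxHeartbeats 2000000 in
theorem Asum_eq (G) (k : Fin 4 → ℝ) : ∑ α : Fin 3, k α.succ • Aalpha G α =
    Ax (petrov G)⁻¹ (|(petrov G).det| ^ ((1 : ℝ) / 6)) k := by
  have hneg : |(petrov G).det| ^ (-(1 : ℝ) / 6) = (|(petrov G).det| ^ ((1 : ℝ) / 6))⁻¹ := by
    rw [neg_div, Real.rpow_neg (abs_nonneg _)]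
  have hv : ∀ i j l : Fin 3, vol G 0 i.succ j.succ l.succ =
      |(petrov G).det| ^ ((1 : ℝ) / 6) * eps3 i j l := by
    intro i j l; rw [vol, eps_eq]
  have hvi : ∀ i j l : Fin 3, volInv G 0 i.succ j.succ l.succ =
      (|(petrov G).det| ^ ((1 : ℝ) / 6))⁻¹ * eps3 i j l := by
    intro i j l; rw [volInv, eps_eq, hneg]
  generalize |(petrov G).det| ^ ((1 : ℝ) / 6) = w at *
  ext i j
  simp only [Fin.sum_univ_three, Matrix.add_apply, Matrix.smul_apply, smul_eq_mul, Aalpha, hv, hvi,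
    ginv]
  generalize (petrov G)⁻¹ = h
  fin_cases i <;> fin_cases j <;>
    simp [blk, Ax, Lx, eps3, fromPetrov, bSgn, bIdx] <;> ring



theorem mem_range_of_left_null (M : Matrix (Fin 6) (Fin 6) ℝ) (y : Fin 6 → ℝ)
    (h : ∀ l : Fin 6 → ℝ, Matrix.vecMul l M = 0 → l ⬝ᵥ y = 0) : ∃ w, M.mulVec w = y := by
  by_contra hcon
  have hy : y ∉ LinearMap.range M.mulVecLin := by
    rintro ⟨w, hw⟩; exact hcon ⟨w, by simpa using hw⟩
  obtain ⟨f, hf, hle⟩ := Submodule.exists_le_ker_of_notMem hy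
  let l : Fin 6 → ℝ := fun i => f (Pi.single i 1)
  have hl : ∀ z, f z = l ⬝ᵥ z := by
    intro z
    conv_lhs => rw [pi_eq_sum_univ' z]
    simp [l, dotProduct, mul_comm]
  apply hf
  rw [hl]
  apply h
  ext j
  have : f (M.mulVec (Pi.single j 1)) = 0 := by
    have := hle ⟨Pi.single j 1, rfl⟩
    simpa using this
  rw [hl, Matrix.dotProduct_mulVec] at this
  simpa using this

theorem isUnit_A0 (G) (hA0 : IsUnit (Matrix.of fun μ ν : Fin 3 => ginv G 0 μ.succ 0 ν.succ).det) :
    IsUnit (A0mat G).det := by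
  have : A0mat G = Matrix.reindex finSumFinEquiv finSumFinEquiv
      (Matrix.fromBlocks (Matrix.of fun μ ν : Fin 3 => ginv G 0 μ.succ 0 ν.succ) 0 0
        (1 : Matrix (Fin 3) (Fin 3) ℝ)) := by
    rw [← Equiv.symm_apply_eq]
    ext i j
    rcases i with i | i <;> rcases j with j | j <;>
      fin_cases i <;> fin_cases j <;> rfl
  rw [this, Matrix.det_reindex_self, Matrix.det_fromBlocks_zero₂₁]
  simpa using hA0

theorem Bf_expand (h : Matrix (Fin 6) (Fin 6) ℝ) (X Y : Fin 6 → ℝ) :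
    Bf h X Y = ∑ i, ∑ j, X i * h i j * Y j := by
  simp [Bf, dotProduct, Matrix.mulVec, Finset.mul_sum, mul_assoc]

theorem crit (h : Matrix (Fin 6) (Fin 6) ℝ) (hh : h.transpose = h) (w : ℝ) (hw : w ≠ 0)
    (k x : Fin 4 → ℝ) (hg : Good h k x) :
    ∃ u z : Fin 6 → ℝ, u ≠ 0 ∧ (Ax h w k).mulVec u = 0 ∧
      (Ax h w k).mulVec z = (A0x h).mulVec u := by
  obtain ⟨hk0, hW, hQ, hΦ⟩ := hg
  have hs : ∀ i j, h i j = h j i := fun i j => by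
    conv_lhs => rw [← hh]
    rfl
  have s10 := hs 1 0
  have s20 := hs 2 0
  have s30 := hs 3 0
  have s40 := hs 4 0
  have s50 := hs 5 0
  have s21 := hs 2 1
  have s31 := hs 3 1
  have s41 := hs 4 1
  have s51 := hs 5 1
  have s32 := hs 3 2
  have s42 := hs 4 2
  have s52 := hs 5 2
  have s43 := hs 4 3
  have s53 := hs 5 3
  have s54 := hs 5 4
  let u : Fin 6 → ℝ := ![-w * k 1 * x 0, -w * k 2 * x 0, -w * k 3 * x 0,
    k 2 * x 3 - k 3 * x 2, k 3 * x 1 - k 1 * x 3, k 1 * x 2 - k 2 * x 1]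
  have hu : u ≠ 0 := by
    intro h0
    apply hW
    have e0 := congrFun h0 0
    have e1 := congrFun h0 1
    have e2 := congrFun h0 2
    have e3 := congrFun h0 3
    have e4 := congrFun h0 4
    have e5 := congrFun h0 5
    simp [u, hw] at e0 e1 e2 e3 e4 e5
    rw [Wd_vals]; ext i
    fin_cases i <;> simp [hk0] <;> assumption
  have hker : (Ax h w k).mulVec u = 0 := by
    have q1 := hQ ![0,1,0,0]
    have q2 := hQ ![0,0,1,0]
    have q3 := hQ ![0,0,0,1]
    simp only [Bf_expand, Wd_vals, Fin.sum_univ_six, hk0] at q1 q2 q3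
    simp [s10, s20, s30, s40, s50, s21, s31, s41, s51, s32, s42, s52, s43, s53, s54] at q1 q2 q3
    ext i
    fin_cases i
    all_goals
      simp [Ax, Lx, u, Matrix.mulVec, dotProduct, Fin.sum_univ_six, s10, s20, s30, s40, s50, s21,
        s31, s41, s51, s32, s42, s52, s43, s53, s54]
    · linear_combination w * q1
    · linear_combination w * q2
    · linear_combination w * q3
    all_goals ring
  obtain ⟨z, hz⟩ := mem_range_of_left_null (Ax h w k) ((A0x h).mulVec u) (by
    intro l hl
    have hv : w * w⁻¹ = 1 := mul_inv_cancel₀ hw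
    have c0 := congrFun hl 0
    have c1 := congrFun hl 1
    have c2 := congrFun hl 2
    have c3 := congrFun hl 3
    have c4 := congrFun hl 4
    have c5 := congrFun hl 5
    simp [Ax, Lx, Matrix.vecMul, dotProduct, Fin.sum_univ_six, s10, s20, s30, s40, s50, s21,
        s31, s41, s51, s32, s42, s52, s43, s53, s54] at c0 c1 c2 c3 c4 c5
    have r3 : l 0 * (h 3 5 * k 2 - h 4 5 * k 3) + l 1 * (- h 3 5 * k 1 + h 5 5 * k 3) +
        l 2 * (h 4 5 * k 1 - h 5 5 * k 2) = 0 := by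
      apply mul_left_cancel₀ hw
      linear_combination -c3
    have r4 : l 0 * (h 3 4 * k 2 - h 4 4 * k 3) + l 1 * (- h 3 4 * k 1 + h 4 5 * k 3) +
        l 2 * (h 4 4 * k 1 - h 4 5 * k 2) = 0 := by
      apply mul_left_cancel₀ hw
      linear_combination -c4
    have r5 : l 0 * (h 3 3 * k 2 - h 3 4 * k 3) + l 1 * (- h 3 3 * k 1 + h 3 5 * k 3) +
        l 2 * (h 3 4 * k 1 - h 3 5 * k 2) = 0 := by
      apply mul_left_cancel₀ hw
      linear_combination -c5
    have hΦp := hΦ ![0, l 0, l 1, l 2] ⟨rfl, by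
      intro y z hy hz
      simp only [Bf_expand, Wd_vals, Fin.sum_univ_six, hk0, hy, hz]
      simp [s43, s53, s54]
      linear_combination (y 1 * z 2 - y 2 * z 1) * r5 + (y 3 * z 1 - y 1 * z 3) * r4
        + (y 2 * z 3 - y 3 * z 2) * r3, by
      simp only [Bf_expand, Wd_vals, Fin.sum_univ_six, hk0, f0]
      simp [s10, s20, s30, s40, s50, s21, s31, s41, s51, s32, s42, s52, s43, s53, s54]
      linear_combination - k 1 * c0 - k 2 * c1 - k 3 * c2⟩
    simp only [Phi, Bf_expand, Wd_vals, Fin.sum_univ_six, hk0, f0] at hΦp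
    simp [s10, s20, s30, s40, s50, s21, s31, s41, s51, s32, s42, s52, s43, s53, s54] at hΦp
    simp [A0x, u, Matrix.mulVec, dotProduct, Fin.sum_univ_six, s10, s20, s21]
    linear_combination -w * hΦp - w * x 1 * c0 - w * x 2 * c1 - w * x 3 * c2 -
      (l 3 * (k 2 * x 3 - k 3 * x 2) + l 4 * (k 3 * x 1 - k 1 * x 3)
        + l 5 * (k 1 * x 2 - k 2 * x 1)) * hv)
  exact ⟨u, z, hu, hker, hz⟩


theorem asum (f : Fin 4 → Fin 4 → ℝ) (hf : ∀ m n, f m n = - f n m) (a b : Fin 4 → ℝ) :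
    ∑ m, ∑ n, a m * b n * f m n = ∑ A, Wd a b A * f (pFst A) (pSnd A) := by
  have d0 : ∀ m, f m m = 0 := fun m => by linarith [hf m m]
  have h1 := hf 1 0
  have h2 := hf 2 0
  have h3 := hf 3 0
  have h4 := hf 2 1
  have h5 := hf 1 3
  have h6 := hf 3 2
  rw [Wd_vals]
  simp [Fin.sum_univ_four, Fin.sum_univ_six, pFst, pSnd, d0, h1, h2, h3, h4, h5, h6]
  ring

/-- second compound matrix -/
def Tc (t : Matrix (Fin 4) (Fin 4) ℝ) : Matrix (Fin 6) (Fin 6) ℝ :=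
  Matrix.of fun A B => Wd (fun m => t m (pFst B)) (fun m => t m (pSnd B)) A

theorem petrov_transform (G : Fin 4 → Fin 4 → Fin 4 → Fin 4 → ℝ)
    (hsym : ∀ a b c d, G a b c d = G c d a b)
    (hasym : ∀ a b c d, G a b c d = - G b a c d) (t : Matrix (Fin 4) (Fin 4) ℝ) :
    petrov (transform t G) = (Tc t).transpose * petrov G * Tc t := by
  have hasym2 : ∀ a b c d, G a b c d = - G a b d c := by
    intro a b c d; rw [hsym, hasym, hsym]
  have key : ∀ a b c d, transform t G a b c d =
      ∑ A, ∑ B, Wd (fun m => t m a) (fun m => t m b) A * G (pFst A) (pSnd A) (pFst B) (pSnd B) *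
        Wd (fun m => t m c) (fun m => t m d) B := by
    intro a b c d
    have h1 : transform t G a b c d = ∑ m, ∑ n, t m a * t n b *
        (∑ p, ∑ q, t p c * t q d * G m n p q) := by
      unfold transform
      simp only [Finset.mul_sum]
      refine Finset.sum_congr rfl fun m _ => Finset.sum_congr rfl fun n _ =>
        Finset.sum_congr rfl fun p _ => Finset.sum_congr rfl fun q _ => by ring
    rw [h1, asum (fun m n => ∑ p, ∑ q, t p c * t q d * G m n p q) ?_ (fun m => t m a)
      (fun m => t m b)]
    · refine Finset.sum_congr rfl fun A _ => ?_
      rw [asum (fun p q => G (pFst A) (pSnd A) p q) (fun p q => hasym2 _ _ p q) (fun m => t m c)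
        (fun m => t m d), Finset.mul_sum]
      exact Finset.sum_congr rfl fun B _ => by ring
    · intro m n
      simp only [← Finset.sum_neg_distrib]
      refine Finset.sum_congr rfl fun p _ => Finset.sum_congr rfl fun q _ => ?_
      rw [hasym m n]; ring
  ext A B
  rw [petrov, Matrix.of_apply, key, Matrix.mul_apply]
  simp only [Matrix.mul_apply, Finset.sum_mul]
  rw [Finset.sum_comm]
  rfl

theorem det_eq_Bf (t : Matrix (Fin 4) (Fin 4) ℝ) : t.det =
    Bf Emat (Wd (fun m => t m 0) (fun m => t m 1)) (Wd (fun m => t m 2) (fun m => t m 3)) := by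
  rw [Bf_Emat_Wd]
  simp [Matrix.det_succ_row_zero, Fin.sum_univ_succ, Fin.succAbove]
  ring

theorem Emat_sq : Emat * Emat = 1 := by
  ext i j; fin_cases i <;> fin_cases j <;> simp [Emat, Matrix.mul_apply, Fin.sum_univ_six]

theorem Emat_transpose : Emat.transpose = Emat := by
  ext i j; fin_cases i <;> fin_cases j <;> simp [Emat]

theorem Tc_Emat (t : Matrix (Fin 4) (Fin 4) ℝ) :
    (Tc t).transpose * Emat * Tc t = t.det • Emat := by
  have h : ∀ A B, ((Tc t).transpose * Emat * Tc t) A B =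
      Bf Emat (Wd (fun m => t m (pFst A)) (fun m => t m (pSnd A)))
        (Wd (fun m => t m (pFst B)) (fun m => t m (pSnd B))) := by
    intro A B
    rw [Matrix.mul_assoc, Matrix.mul_apply]
    rfl
  ext A B
  rw [h, Matrix.smul_apply, det_eq_Bf, Bf_Emat_Wd, Bf_Emat_Wd]
  fin_cases A <;> fin_cases B <;> simp [Emat, pFst, pSnd] <;> ring

theorem petrov_vol (G) : petrov (vol G) = |(petrov G).det| ^ ((1 : ℝ) / 6) • Emat := by
  ext A B
  simp [petrov, vol, petrov_eps]

theorem petrov_symm (G : Fin 4 → Fin 4 → Fin 4 → Fin 4 → ℝ)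
    (hsym : ∀ a b c d, G a b c d = G c d a b) : (petrov G).transpose = petrov G := by
  ext A B; simp only [petrov, Matrix.transpose_apply, Matrix.of_apply]; exact hsym _ _ _ _

theorem final_algebra (C : Matrix (Fin 6) (Fin 6) ℝ) (u z : Fin 6 → ℝ) (hu : u ≠ 0)
    (h1 : C.mulVec u = 0) (h2 : C.mulVec z = u) :
    Module.finrank ℂ (LinearMap.ker (Matrix.toLin' (C.map (algebraMap ℝ ℂ))))
        < (C.map (algebraMap ℝ ℂ)).charpoly.rootMultiplicity 0 := by
  set M := C.map (algebraMap ℝ ℂ) with hM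
  set f : Module.End ℂ (Fin 6 → ℂ) := Matrix.toLin' M with hf
  have hmv : ∀ v : Fin 6 → ℝ, f (fun i => (v i : ℂ)) = fun i => ((C.mulVec v i : ℝ) : ℂ) := by
    intro v
    ext i
    simp [hf, hM, Matrix.mulVec, dotProduct]
  have hchar : M.charpoly = f.charpoly := by
    rw [hf, ← Matrix.charpoly_toLin']
  rw [hchar, ← LinearMap.finrank_maxGenEigenspace_eq]
  apply Submodule.finrank_lt_finrank_of_lt
  have hzf : f (fun i => (z i : ℂ)) = fun i => (u i : ℂ) := by rw [hmv, h2]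
  have huf : f (fun i => (u i : ℂ)) = 0 := by rw [hmv, h1]; ext i; simp
  refine lt_of_le_of_ne ?_ ?_
  · intro v hv
    rw [Module.End.mem_maxGenEigenspace]
    exact ⟨1, by simpa using hv⟩
  · intro heq
    have hz : (fun i => (z i : ℂ)) ∈ f.maxGenEigenspace 0 := by
      rw [Module.End.mem_maxGenEigenspace]
      refine ⟨2, ?_⟩
      simp [pow_two, hzf, huf]
    rw [← heq, LinearMap.mem_ker, hzf] at hz
    apply hu
    ext i
    simpa using congrFun hz i

theorem evolution_symbol_not_diagonalizable_of_jordan_chain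
    (G : Fin 4 → Fin 4 → Fin 4 → Fin 4 → ℝ)
    (hsym : ∀ a b c d, G a b c d = G c d a b)
    (hasym : ∀ a b c d, G a b c d = - G b a c d)
    (hinv : IsUnit (petrov G).det)
    (lam : ℝ) (Ω₁ Ω₂ : Fin 6 → ℝ) (hΩ₁ : Ω₁ ≠ 0)
    (h1 : (Kmat G).mulVec Ω₁ = lam • Ω₁)
    (h2 : (Kmat G).mulVec Ω₂ = Ω₁ + lam • Ω₂)
    (t : Matrix (Fin 4) (Fin 4) ℝ) (ht : IsUnit t.det)
    (hfres : fresnelPoly (transform t G) (fun i => if i = 0 then 1 else 0) ≠ 0)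
    (hA0 : IsUnit (Matrix.of fun μ ν : Fin 3 => ginv (transform t G) 0 μ.succ 0 ν.succ).det) :
    ∃ k : Fin 4 → ℝ, k 0 = 0 ∧ k ≠ 0 ∧
      Module.finrank ℂ
          (LinearMap.ker (Matrix.toLin' ((Cmat (transform t G) k).map (algebraMap ℝ ℂ))))
        < ((Cmat (transform t G) k).map (algebraMap ℝ ℂ)).charpoly.rootMultiplicity 0 := by
  have hd : t.det ≠ 0 := ht.ne_zero
  have hw : |(petrov G).det| ^ ((1 : ℝ) / 6) ≠ 0 :=
    (Real.rpow_pos_of_pos (abs_pos.2 hinv.ne_zero) _).ne'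
  have hPt : ((petrov G)⁻¹).transpose = (petrov G)⁻¹ := by
    rw [Matrix.transpose_nonsing_inv, petrov_symm G hsym]
  -- the eigenvalue equations for the inverse metric
  unfold Kmat at h1 h2
  rw [petrov_vol, Matrix.smul_mul, Matrix.smul_mulVec, ← Matrix.mulVec_mulVec] at h1 h2
  set w := |(petrov G).det| ^ ((1 : ℝ) / 6) with hwdef
  set P := petrov G with hP
  have hEE : ∀ X, Emat.mulVec (Emat.mulVec X) = X := by
    intro X; rw [Matrix.mulVec_mulVec, Emat_sq, Matrix.one_mulVec]
  have g1 : w • (P⁻¹).mulVec Ω₁ = lam • Emat.mulVec Ω₁ := by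
    have := congrArg Emat.mulVec h1
    rwa [Matrix.mulVec_smul, Matrix.mulVec_smul, hEE] at this
  have g2 : w • (P⁻¹).mulVec Ω₂ = Emat.mulVec Ω₁ + lam • Emat.mulVec Ω₂ := by
    have := congrArg Emat.mulVec h2
    rwa [Matrix.mulVec_smul, Matrix.mulVec_add, Matrix.mulVec_smul, hEE] at this
  have iso : Bf Emat Ω₁ Ω₁ = 0 := by
    have a1 : w * Bf P⁻¹ Ω₂ Ω₁ = lam * Bf Emat Ω₂ Ω₁ := by
      have := congrArg (fun X => Ω₂ ⬝ᵥ X) g1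
      simpa [Bf, dotProduct_smul] using this
    have a2 : w * Bf P⁻¹ Ω₁ Ω₂ = Bf Emat Ω₁ Ω₁ + lam * Bf Emat Ω₁ Ω₂ := by
      have := congrArg (fun X => Ω₁ ⬝ᵥ X) g2
      simpa [Bf, dotProduct_smul, dotProduct_add] using this
    rw [Bf_symm _ hPt, Bf_symm Emat Emat_transpose Ω₁ Ω₂] at a2
    linarith
  -- change of basis
  set T := Tc t with hT
  have hTE := Tc_Emat t
  rw [← hT] at hTE
  have hleft : (t.det⁻¹ • (Emat * T.transpose * Emat)) * T = 1 := by
    rw [Matrix.smul_mul, Matrix.mul_assoc Emat, Matrix.mul_assoc Emat, hTE, Matrix.mul_smul,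
      Emat_sq, smul_smul, inv_mul_cancel₀ hd, one_smul]
  have hright := mul_eq_one_comm.1 hleft
  have hTu : IsUnit T.det := (Matrix.isUnit_iff_isUnit_det T).1 (IsUnit.of_mul_eq_one _ hright)
  have hP' : petrov (transform t G) = T.transpose * P * T := petrov_transform G hsym hasym t
  set F := T.transpose.mulVec Ω₁ with hF
  have hTF : T.mulVec (Emat.mulVec F) = t.det • Emat.mulVec Ω₁ := by
    have e : T * Emat * T.transpose = t.det • Emat := by
      have := congrArg (fun X => t.det • (X * Emat)) hright
      simp only [Matrix.mul_smul, Matrix.smul_mul, smul_smul, mul_inv_cancel₀ hd, one_smul,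
        Matrix.one_mul, Matrix.mul_assoc, Emat_sq, Matrix.mul_one] at this
      rw [Matrix.mul_assoc]; exact this
    rw [hF, Matrix.mulVec_mulVec, Matrix.mulVec_mulVec, e, Matrix.smul_mulVec]
  have hF0 : F ≠ 0 := by
    intro h0
    apply hΩ₁
    rw [h0, Matrix.mulVec_zero, Matrix.mulVec_zero] at hTF
    have h3 : Emat.mulVec Ω₁ = 0 := (smul_eq_zero.1 hTF.symm).resolve_left hd
    rw [← hEE Ω₁, h3, Matrix.mulVec_zero]
  have hFpl : Bf Emat F F = 0 := by
    have : Bf Emat F F = Ω₁ ⬝ᵥ T.mulVec (Emat.mulVec F) := by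
      rw [Bf, Matrix.dotProduct_mulVec Ω₁, ← Matrix.mulVec_transpose]
    rw [this, hTF, dotProduct_smul]
    change t.det • Bf Emat Ω₁ Ω₁ = 0
    rw [iso, smul_zero]
  have hPdet' : IsUnit (petrov (transform t G)).det := by
    rw [hP', Matrix.det_mul, Matrix.det_mul, Matrix.det_transpose]
    exact (hTu.mul hinv).mul hTu
  set H := (petrov (transform t G))⁻¹ with hH
  have hHt : H.transpose = H := by
    rw [hH, Matrix.transpose_nonsing_inv, hP']
    simp only [Matrix.transpose_mul, Matrix.transpose_transpose, Matrix.mul_assoc]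
    rw [hP, petrov_symm G hsym]
  have hHF : H.mulVec F = (lam * w⁻¹ * t.det⁻¹) • Emat.mulVec F := by
    have e : (petrov (transform t G)).mulVec ((lam * w⁻¹ * t.det⁻¹) • Emat.mulVec F) = F := by
      have g1' : lam • Emat.mulVec Ω₁ = w • (P⁻¹).mulVec Ω₁ := g1.symm
      rw [hP', ← Matrix.mulVec_mulVec, Matrix.mulVec_smul, hTF, smul_smul,
        mul_assoc, inv_mul_cancel₀ hd, mul_one, mul_comm, mul_smul, g1', smul_smul,
        inv_mul_cancel₀ hw, one_smul, ← Matrix.mulVec_mulVec, Matrix.mulVec_mulVec _ P,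
        Matrix.mul_nonsing_inv _ hinv, Matrix.one_mulVec]
    conv_lhs => rw [← e]
    rw [hH, Matrix.mulVec_mulVec, Matrix.nonsing_inv_mul _ hPdet', Matrix.one_mulVec]
  obtain ⟨k, x, hg⟩ := good_of_eigen H _ hHt F hF0 (by
    rw [Bf_Emat] at hFpl; linarith) hHF
  have hw' : |(petrov (transform t G)).det| ^ ((1 : ℝ) / 6) ≠ 0 :=
    (Real.rpow_pos_of_pos (abs_pos.2 hPdet'.ne_zero) _).ne'
  obtain ⟨u, z, hu, hu0, hz⟩ := crit H hHt _ hw' k x hg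
  refine ⟨k, hg.1, ?_, ?_⟩
  · rintro rfl
    apply hg.2.1
    ext A; simp [Wd]
  · refine final_algebra _ u (-z) hu ?_ ?_
    · rw [Cmat, Asum_eq, Matrix.neg_mulVec, ← Matrix.mulVec_mulVec, ← hH, hu0]; simp
    · rw [Cmat, Asum_eq, Matrix.neg_mulVec, ← Matrix.mulVec_mulVec, ← hH, Matrix.mulVec_neg, hz,
        Matrix.mulVec_neg, neg_neg, ← A0mat_eq, Matrix.mulVec_mulVec,
        Matrix.nonsing_inv_mul _ (isUnit_A0 _ hA0), Matrix.one_mulVec]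

end
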